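/- arXiv:cs/0201008 — 2 statements merged into one kernel-verified Lean document; each statement's English description precedes it below -/
import Mathlib

section
/- Deterministic, non-deterministic, and generalised finite string tree automata recognise the same class of string tree languages: a language L ⊆ T(Σ) is recognised by some GNFSTA over Σ if and only if it is recognised by some NFSTA, if and only if it is recognised (after the injective alphabet renaming a ↦ {a}) by some DFSTA. -/
/-!  Common definitions: string trees over an alphabet (following
N. Schmidt, A. Patel, "Using Tree Automata and Regular Expressions to
Manipulate Hierarchically Structured Data").

Symbols: an ambient type `U` of "plain" symbols, extended with the two
angle brackets and the slash. -/

inductive TSym (U : Type) : Type where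
  | op : TSym U          -- ⟨
  | cl : TSym U          -- ⟩
  | slash : TSym U       -- /
  | ltr : U → TSym U     -- a plain symbol

namespace StringTree

variable {U V : Type}

/-- The letters of an alphabet `S ⊆ U`, viewed as (non-bracket) symbols. -/
def ltrs (S : Set U) : Set (TSym U) := {x | ∃ a ∈ S, x = TSym.ltr a}

/-- String trees over a set `S` of allowed non-bracket symbols:
`⟨⟩ ∈ T`, `⟨a⟩ ∈ T` for `a ∈ S`, closed under concatenation
`⟨x⟩·⟨y⟩ = ⟨xy⟩` and encapsulation `t ↦ ⟨t⟩`. -/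
inductive IsTree (S : Set (TSym U)) : List (TSym U) → Prop where
  | nil : IsTree S [TSym.op, TSym.cl]
  | single {x : TSym U} : x ∈ S → IsTree S [TSym.op, x, TSym.cl]
  | concat {x y : List (TSym U)} :
      IsTree S (TSym.op :: (x ++ [TSym.cl])) → IsTree S (TSym.op :: (y ++ [TSym.cl])) →
      IsTree S (TSym.op :: ((x ++ y) ++ [TSym.cl]))
  | encap {t : List (TSym U)} : IsTree S t → IsTree S (TSym.op :: (t ++ [TSym.cl]))

/-- `T(Σ)`, the set of string trees over the alphabet `Σ ⊆ U`. -/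
def TreeSet (S : Set U) : Set (List (TSym U)) := {t | IsTree (ltrs S) t}

/-- A plain string, viewed as a string of symbols. -/
def strOf (s : List U) : List (TSym U) := s.map TSym.ltr

/-- Move relation of a generalised non-deterministic finite string tree
automaton with initial states `Q0`, horizontal rules `Δ` and vertical
rules `γ`:
(a) `l⟨s⟩r ⇒ l⟨a/s⟩r` if `a ∈ Q0` (initial state assignment);
(b) `l⟨a/bs⟩r ⇒ l⟨c/s⟩r` if `(a,b) → c ∈ Δ` (horizontal move);
(c) `l⟨a/⟩r ⇒ lbr` if `b ∈ γ a` (vertical move). -/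
inductive GMove (Q0 : Set U) (Δ : Set (U × U × U)) (γ : U → Set U) :
    List (TSym U) → List (TSym U) → Prop where
  | init {l r : List (TSym U)} {s : List U} {a : U} :
      a ∈ Q0 →
      GMove Q0 Δ γ (l ++ [TSym.op] ++ strOf s ++ [TSym.cl] ++ r)
        (l ++ [TSym.op, TSym.ltr a, TSym.slash] ++ strOf s ++ [TSym.cl] ++ r)
  | horiz {l r : List (TSym U)} {s : List U} {a b c : U} :
      (a, b, c) ∈ Δ →
      GMove Q0 Δ γ (l ++ [TSym.op, TSym.ltr a, TSym.slash, TSym.ltr b] ++ strOf s ++ [TSym.cl] ++ r)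
        (l ++ [TSym.op, TSym.ltr c, TSym.slash] ++ strOf s ++ [TSym.cl] ++ r)
  | vert {l r : List (TSym U)} {a b : U} :
      b ∈ γ a →
      GMove Q0 Δ γ (l ++ [TSym.op, TSym.ltr a, TSym.slash, TSym.cl] ++ r)
        (l ++ [TSym.ltr b] ++ r)

/-- Move relation of an NFSTA: the GNFSTA moves with the single initial
state `q0` and with the vertical move `l⟨a/⟩r ⇒ lar`. -/
def NMove (q0 : U) (Δ : Set (U × U × U)) : List (TSym U) → List (TSym U) → Prop :=
  GMove {q0} Δ (fun a => {a})

/-- The final tree `⟨q/⟩`. -/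
def finalTree (q : U) : List (TSym U) := [TSym.op, TSym.ltr q, TSym.slash, TSym.cl]

/-- Acceptance by a GNFSTA: `t ⇒* ⟨q_f/⟩` for some `q_f ∈ Q_f`. -/
def GAccepts (Q0 : Set U) (Δ : Set (U × U × U)) (γ : U → Set U) (Qf : Set U)
    (t : List (TSym U)) : Prop :=
  ∃ qf ∈ Qf, Relation.ReflTransGen (GMove Q0 Δ γ) t (finalTree qf)

/-- The language of a GNFSTA: the set of trees of `T(Σ)` it accepts. -/
def GLang (Sa Q0 : Set U) (Δ : Set (U × U × U)) (γ : U → Set U) (Qf : Set U) :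
    Set (List (TSym U)) :=
  {t | t ∈ TreeSet Sa ∧ GAccepts Q0 Δ γ Qf t}

/-- Acceptance by an NFSTA. -/
def NAccepts (q0 : U) (Δ : Set (U × U × U)) (Qf : Set U) (t : List (TSym U)) : Prop :=
  GAccepts {q0} Δ (fun a => {a}) Qf t

/-- The language of an NFSTA. -/
def NLang (Sa : Set U) (q0 : U) (Δ : Set (U × U × U)) (Qf : Set U) : Set (List (TSym U)) :=
  GLang Sa {q0} Δ (fun a => {a}) Qf

/-- Well-formedness of a GNFSTA `(Σ, Q, Q_f, Q₀, Δ, γ)`: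
`Q` is finite, `Σ ⊆ Q`, `Q_f ⊆ Q`, `Q₀ ⊆ Q`, the rules of `Δ` are over `Q`,
and `γ` maps states of `Q` to sets of states of `Q`. -/
def GWF (Sa Q Qf Q0 : Set U) (Δ : Set (U × U × U)) (γ : U → Set U) : Prop :=
  Q.Finite ∧ Sa ⊆ Q ∧ Qf ⊆ Q ∧ Q0 ⊆ Q ∧
    (∀ p ∈ Δ, p.1 ∈ Q ∧ p.2.1 ∈ Q ∧ p.2.2 ∈ Q) ∧ (∀ q ∈ Q, γ q ⊆ Q)

/-- Well-formedness of an NFSTA `(Σ, Q, Q_f, q₀, Δ)`. -/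
def NWF (Sa Q Qf : Set U) (q0 : U) (Δ : Set (U × U × U)) : Prop :=
  Q.Finite ∧ Sa ⊆ Q ∧ Qf ⊆ Q ∧ q0 ∈ Q ∧ ∀ p ∈ Δ, p.1 ∈ Q ∧ p.2.1 ∈ Q ∧ p.2.2 ∈ Q

/-- A GNFSTA has pure states: no horizontal or vertical rule produces a
symbol of `Σ`, no horizontal rule has its state (first) component in `Σ`,
`γ(a) = ∅` for `a ∈ Σ`, and `Q₀ ∪ Q_f ⊆ Q ∖ Σ`. -/
def PureG (Sa Q Qf Q0 : Set U) (Δ : Set (U × U × U)) (γ : U → Set U) : Prop :=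
  (∀ p ∈ Δ, p.1 ∉ Sa ∧ p.2.2 ∉ Sa) ∧ (∀ a ∈ Sa, γ a = ∅) ∧
    (∀ q : U, ∀ p ∈ γ q, p ∉ Sa) ∧ Q0 ⊆ Q \ Sa ∧ Qf ⊆ Q \ Sa

/-- An NFSTA has pure states. -/
def PureN (Sa Q Qf : Set U) (q0 : U) (Δ : Set (U × U × U)) : Prop :=
  (∀ p ∈ Δ, p.1 ∉ Sa ∧ p.2.2 ∉ Sa) ∧ q0 ∈ Q \ Sa ∧ Qf ⊆ Q \ Sa


/-! Additional notions. -/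

/-- `⟨s₀ t₁ s₁ ⋯ tₙ sₙ⟩`: the string tree assembled from a head string `s₀`
and a list of pairs `(tᵢ, sᵢ)` of a subtree and a following string. -/
def flatRep (s0 : List U) (rest : List (List (TSym U) × List U)) : List (TSym U) :=
  TSym.op :: (strOf s0 ++ (rest.map (fun p => p.1 ++ strOf p.2)).flatten ++ [TSym.cl])

/-- The inner string of a tree `⟨x⟩`, i.e. `x`. -/
def innerStr (t : List (TSym U)) : List (TSym U) := (t.drop 1).dropLast

/-- Tree concatenation `⟨x⟩·⟨y⟩ = ⟨xy⟩`. -/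
def tconc (u v : List (TSym U)) : List (TSym U) :=
  TSym.op :: ((innerStr u ++ innerStr v) ++ [TSym.cl])

/-- The null tree `⟨⟩`. -/
def nilTree : List (TSym U) := [TSym.op, TSym.cl]

/-- `w` is a string over `Q ∪ {/}`. -/
def OverQSlash (Q : Set U) (w : List (TSym U)) : Prop :=
  ∀ x ∈ w, x = TSym.slash ∨ ∃ q ∈ Q, x = TSym.ltr q

/-- Renaming of symbols along a map of plain symbols. -/
def symRel (f : U → V) : TSym U → TSym V
  | TSym.op => TSym.op
  | TSym.cl => TSym.cl
  | TSym.slash => TSym.slash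
  | TSym.ltr a => TSym.ltr (f a)

/-- Renaming of the symbols of a tree along a map of plain symbols. -/
def treeRel (f : U → V) (t : List (TSym U)) : List (TSym V) := t.map (symRel f)

/-- The injective renaming `a ↦ {a}`. -/
def sing : U → Set U := fun a => {a}

/-- The vertical-rule function `γ` of a pure-state GNFSTA, extended by
`γ(a) = {a}` for `a ∈ Σ` and to sets by unions: `γ(b') = ⋃_{b ∈ b'} γ(b)`. -/
def gammaExt (Sa : Set U) (γ : U → Set U) (b' : Set U) : Set U :=
  {c | ∃ b ∈ b', c ∈ γ b ∨ (c = b ∧ b ∈ Sa)}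

/-- The transition function of the subset construction:
`Δ'(a', b') = {c | (a,b) → c ∈ Δ, a ∈ a', b ∈ γ(b')}`. -/
def subsetDelta (Sa : Set U) (γ : U → Set U) (Δ : Set (U × U × U)) (a' b' : Set U) : Set U :=
  {c | ∃ a ∈ a', ∃ b ∈ gammaExt Sa γ b', (a, b, c) ∈ Δ}

/-- The rule set of the subset-construction DFSTA, defined on pairs of
subsets of `Q`. -/
def subsetRules (Sa : Set U) (γ : U → Set U) (Δ : Set (U × U × U)) (Q : Set U) :
    Set (Set U × Set U × Set U) :=
  {x | x.1 ⊆ Q ∧ x.2.1 ⊆ Q ∧ x.2.2 = subsetDelta Sa γ Δ x.1 x.2.1}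

/-- A rule set is deterministic: at most one rule per left-hand side. -/
def Deterministic {α : Type} (Δ : Set (α × α × α)) : Prop :=
  ∀ a b c₁ c₂, (a, b, c₁) ∈ Δ → (a, b, c₂) ∈ Δ → c₁ = c₂

/-- `L` is recognised by some GNFSTA over the alphabet `Sa`. -/
def RecogG (Sa : Set U) (L : Set (List (TSym U))) : Prop :=
  ∃ Q Qf Q0 Δ γ, GWF Sa Q Qf Q0 Δ γ ∧ GLang Sa Q0 Δ γ Qf = L

/-- `L` is recognised by some NFSTA over the alphabet `Sa`. -/
def RecogN (Sa : Set U) (L : Set (List (TSym U))) : Prop :=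
  ∃ Q Qf q0 Δ, NWF Sa Q Qf q0 Δ ∧ NLang Sa q0 Δ Qf = L

/-- `L` is recognised, after the injective alphabet renaming `a ↦ {a}`,
by some deterministic FSTA. -/
def RecogD (Sa : Set U) (L : Set (List (TSym U))) : Prop :=
  ∃ (Q' Qf' : Set (Set U)) (q0' : Set U) (Δ' : Set (Set U × Set U × Set U)),
    NWF (sing '' Sa) Q' Qf' q0' Δ' ∧ Deterministic Δ' ∧
    NLang (sing '' Sa) q0' Δ' Qf' = treeRel sing '' L

/-- Runs of a classical finite (string) automaton with transition map `δ`. -/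
inductive FASteps (δ : U → U → Set U) : U → List U → U → Prop where
  | nil (q : U) : FASteps δ q [] q
  | cons {q a p s q'} : p ∈ δ q a → FASteps δ p s q' → FASteps δ q (a :: s) q'

/-- The language of a classical finite automaton `(Sa, Q, Q_f, q₀, δ)`. -/
def FALang (Sa : Set U) (δ : U → U → Set U) (q0 : U) (Qf : Set U) : Set (List U) :=
  {s | (∀ a ∈ s, a ∈ Sa) ∧ ∃ qf ∈ Qf, FASteps δ q0 s qf}

/-- `n`-fold composition of a relation: `relPow r n a b` iff `a ⇒ⁿ b`. -/
def relPow {α : Type} (r : α → α → Prop) : ℕ → α → α → Prop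
  | 0, a, b => a = b
  | n + 1, a, c => ∃ b, r a b ∧ relPow r n b c


/-! Ranked terms and classical tree automata. -/

/-- Unranked terms (rose trees) over a symbol type `F`. -/
inductive PreTerm (F : Type) : Type where
  | node : F → List (PreTerm F) → PreTerm F

/-- A term is well-ranked w.r.t. an arity function. -/
inductive WellRanked {F : Type} (ar : F → ℕ) : PreTerm F → Prop where
  | node {f : F} {ts : List (PreTerm F)} : ts.length = ar f →
      (∀ t ∈ ts, WellRanked ar t) → WellRanked ar (PreTerm.node f ts)

/-- The term-to-string-tree map `τ`:
`τ(f(t₁,…,t_p)) = ⟨f τ(t₁) ⋯ τ(t_p)⟩` (and `τ(a) = ⟨a⟩` for constants). -/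
def tau {F : Type} : PreTerm F → List (TSym F)
  | PreTerm.node f ts =>
      TSym.op :: TSym.ltr f :: ((ts.attach.map (fun x => tau x.1)).flatten ++ [TSym.cl])
  decreasing_by
    simp only [PreTerm.node.sizeOf_spec]
    have h := List.sizeOf_lt_of_mem x.2
    omega

/-- A term over the ranked alphabet given by symbols `Sa` and arities `ar`. -/
inductive GoodTerm (Sa : Set U) (ar : U → ℕ) : PreTerm U → Prop where
  | node {f : U} {ts : List (PreTerm U)} : f ∈ Sa → ts.length = ar f →
      (∀ t ∈ ts, GoodTerm Sa ar t) → GoodTerm Sa ar (PreTerm.node f ts)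

/-- Bottom-up runs of a classical tree automaton with rules
`f(q₁,…,qₙ) → q`: `CRun Δh t q` means the run assigns state `q` to `t`. -/
inductive CRun (Δh : Set (U × List U × U)) : PreTerm U → U → Prop where
  | node {f : U} {ts : List (PreTerm U)} {qs : List U} {q : U} :
      (f, qs, q) ∈ Δh → qs.length = ts.length →
      (∀ p ∈ ts.zip qs, CRun Δh p.1 p.2) →
      CRun Δh (PreTerm.node f ts) q

/-- The term language of a classical tree automaton. -/
def TermLang (Sa : Set U) (ar : U → ℕ) (Δh : Set (U × List U × U)) (Qhf : Set U) :
    Set (PreTerm U) :=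
  {t | GoodTerm Sa ar t ∧ ∃ q ∈ Qhf, CRun Δh t q}

/-! Vertical tree representation of strings. -/

def omegaRev : List U → List (TSym U)
  | [] => [TSym.op, TSym.cl]
  | a :: s => TSym.op :: (omegaRev s ++ [TSym.ltr a, TSym.cl])

/-- The vertical tree representation `ω(a₁⋯aₙ) = ⟨⟨⋯⟨⟩a₁⟩a₂⟩⋯aₙ⟩`,
defined by `ω(ε) = ⟨⟩` and `ω(sa) = ⟨ω(s)⟩·⟨a⟩`. -/
def omega (s : List U) : List (TSym U) := omegaRev s.reverse

/-! Regular string tree grammars. -/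

/-- A regular expression is over the symbol set `S`. -/
def REOver (S : Set U) : RegularExpression U → Prop
  | RegularExpression.zero => True
  | RegularExpression.epsilon => True
  | RegularExpression.char a => a ∈ S
  | RegularExpression.plus e₁ e₂ => REOver S e₁ ∧ REOver S e₂
  | RegularExpression.comp e₁ e₂ => REOver S e₁ ∧ REOver S e₂
  | RegularExpression.star e => REOver S e

/-- One derivation step of a regular string tree grammar with rule set `R`:
`lXr →_G l⟨x⟩r` whenever `X → ⟨e⟩ ∈ R` and `x ∈ ⟦e⟧`. -/
def GDeriv (R : Set (U × RegularExpression U)) (u v : List (TSym U)) : Prop :=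
  ∃ (l r : List (TSym U)) (X : U) (e : RegularExpression U) (x : List U),
    (X, e) ∈ R ∧ x ∈ e.matches' ∧
    u = l ++ [TSym.ltr X] ++ r ∧ v = l ++ (TSym.op :: (strOf x ++ [TSym.cl])) ++ r

/-- The language generated by a regular string tree grammar with axiom `S`:
all trees of `T(Σ)` derivable from `S`. -/
def GramLang (Sa : Set U) (S : U) (R : Set (U × RegularExpression U)) :
    Set (List (TSym U)) :=
  {t | t ∈ TreeSet Sa ∧ Relation.ReflTransGen (GDeriv R) [TSym.ltr S] t}

/-- Well-formedness of a regular string tree grammar `(Σ, N, S, R)`. -/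
def GramWF (Sa N : Set U) (S : U) (R : Set (U × RegularExpression U)) : Prop :=
  N.Finite ∧ Disjoint N Sa ∧ S ∈ N ∧ ∀ p ∈ R, p.1 ∈ N ∧ REOver (Sa ∪ N) p.2

/-! The map `Γ` and the instance relation `⊴` of the subset-construction
equivalence proof. -/

/-- `Γ` applies (the extension of) `γ` to every set-symbol that is not
immediately followed by a slash:
`Γ(ε)=ε`, `Γ(⟨s)=⟨Γ(s)`, `Γ(⟩s)=⟩Γ(s)`, `Γ(a/s)=a/Γ(s)`, `Γ(as)=γ(a)Γ(s)`. -/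
def GammaMap (g : Set U → Set U) : List (TSym (Set U)) → List (TSym (Set U))
  | [] => []
  | TSym.op :: s => TSym.op :: GammaMap g s
  | TSym.cl :: s => TSym.cl :: GammaMap g s
  | TSym.slash :: s => TSym.slash :: GammaMap g s
  | TSym.ltr a :: TSym.slash :: s => TSym.ltr a :: TSym.slash :: GammaMap g s
  | TSym.ltr a :: s => TSym.ltr (g a) :: GammaMap g s

/-- Symbol-wise instance relation: brackets and slashes match, and a plain
symbol is an element of the corresponding set-symbol. -/
inductive SymInst : TSym U → TSym (Set U) → Prop where
  | op : SymInst TSym.op TSym.op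
  | cl : SymInst TSym.cl TSym.cl
  | slash : SymInst TSym.slash TSym.slash
  | ltr {a : U} {A : Set U} : a ∈ A → SymInst (TSym.ltr a) (TSym.ltr A)

/-- `v ⊴ v'`: `v` is an instance of `v'`. -/
def Inst (v : List (TSym U)) (v' : List (TSym (Set U))) : Prop :=
  List.Forall₂ SymInst v v'

end StringTree

namespace StringTree

variable {U V : Type}

/-- Abstract syntax of the inner string of a string tree: a sequence of letters and subtrees. -/
inductive Forest (U : Type) : Type where
  | nil : Forest U
  | leaf : U → Forest U → Forest U
  | node : Forest U → Forest U → Forest U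

namespace Forest

/-- The string denoted by a forest. -/
def enc : Forest U → List (TSym U)
  | nil => []
  | leaf a F => TSym.ltr a :: enc F
  | node F G => TSym.op :: (enc F ++ TSym.cl :: enc G)

/-- All letters of the forest belong to `S`. -/
def Over (S : Set U) : Forest U → Prop
  | nil => True
  | leaf a F => a ∈ S ∧ Over S F
  | node F G => Over S F ∧ Over S G

/-- Concatenation of forests. -/
def append : Forest U → Forest U → Forest U
  | nil, H => H
  | leaf a F, H => leaf a (append F H)
  | node F G, H => node F (append G H)

/-- Renaming of letters. -/
def map (f : U → V) : Forest U → Forest V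
  | nil => nil
  | leaf a F => leaf (f a) (map f F)
  | node F G => node (map f F) (map f G)

/-- The string tree with the given inner forest. -/
def tree (F : Forest U) : List (TSym U) := TSym.op :: (F.enc ++ [TSym.cl])

theorem enc_append (F H : Forest U) : (F.append H).enc = F.enc ++ H.enc := by
  induction F with
  | nil => rfl
  | leaf a F ih => simp [append, enc, ih]
  | node F G _ ih => simp [append, enc, ih]

theorem Over.append {S : Set U} {F H : Forest U} (hF : F.Over S) (hH : H.Over S) :
    (F.append H).Over S := by
  induction F with
  | nil => exact hH
  | leaf a F ih => exact ⟨hF.1, ih hF.2⟩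
  | node F G _ ih => exact ⟨hF.1, ih hF.2⟩

theorem enc_map (f : U → V) (F : Forest U) : (F.map f).enc = treeRel f F.enc := by
  induction F with
  | nil => rfl
  | leaf a F ih => simp [map, enc, ih, treeRel, symRel]
  | node F G ih₁ ih₂ => simp [map, enc, ih₁, ih₂, treeRel, symRel]

theorem tree_map (f : U → V) (F : Forest U) : (F.map f).tree = treeRel f F.tree := by
  simp [tree, enc_map, treeRel, symRel]

theorem Over.map {S : Set U} (f : U → V) {F : Forest U} (h : F.Over S) :
    (F.map f).Over (f '' S) := by
  induction F with
  | nil => trivial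
  | leaf a F ih => exact ⟨⟨a, h.1, rfl⟩, ih h.2⟩
  | node F G ih₁ ih₂ => exact ⟨ih₁ h.1, ih₂ h.2⟩

theorem Over.exists_map {S : Set U} {f : U → V} {F : Forest V} (h : F.Over (f '' S)) :
    ∃ G : Forest U, G.Over S ∧ G.map f = F := by
  induction F with
  | nil => exact ⟨nil, trivial, rfl⟩
  | leaf a F ih =>
    obtain ⟨⟨b, hb, rfl⟩, hF⟩ := h
    obtain ⟨G, hG, rfl⟩ := ih hF
    exact ⟨leaf b G, ⟨hb, hG⟩, rfl⟩
  | node F G ih₁ ih₂ =>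
    obtain ⟨F', hF, rfl⟩ := ih₁ h.1
    obtain ⟨G', hG, rfl⟩ := ih₂ h.2
    exact ⟨node F' G', ⟨hF, hG⟩, rfl⟩

theorem Over.isTree {S : Set U} {F : Forest U} (h : F.Over S) : F.tree ∈ TreeSet S := by
  induction F with
  | nil => exact IsTree.nil
  | leaf a F ih =>
    exact IsTree.concat (x := [TSym.ltr a]) (IsTree.single ⟨a, h.1, rfl⟩) (ih h.2)
  | node F G ih₁ ih₂ =>
    have := IsTree.concat (IsTree.encap (ih₁ h.1)) (ih₂ h.2)
    simpa [TreeSet, tree, enc] using this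

end Forest

open Forest in
theorem IsTree.exists_forest {S : Set U} {t : List (TSym U)} (h : IsTree (ltrs S) t) :
    ∃ F : Forest U, F.Over S ∧ F.tree = t := by
  induction h with
  | nil => exact ⟨.nil, trivial, rfl⟩
  | single hx =>
    obtain ⟨a, ha, rfl⟩ := hx
    exact ⟨.leaf a .nil, ⟨ha, trivial⟩, rfl⟩
  | concat _ _ ih₁ ih₂ =>
    obtain ⟨F, hF, e₁⟩ := ih₁
    obtain ⟨G, hG, e₂⟩ := ih₂
    simp only [tree, List.cons.injEq, true_and, List.append_cancel_right_eq] at e₁ e₂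
    exact ⟨F.append G, hF.append hG, by simp [tree, enc_append, e₁, e₂]⟩
  | encap _ ih =>
    obtain ⟨F, hF, rfl⟩ := ih
    exact ⟨.node F .nil, ⟨hF, trivial⟩, by simp [tree, enc]⟩

theorem mem_treeSet_iff {S : Set U} {t : List (TSym U)} :
    t ∈ TreeSet S ↔ ∃ F : Forest U, F.Over S ∧ F.tree = t :=
  ⟨IsTree.exists_forest, by rintro ⟨F, hF, rfl⟩; exact hF.isTree⟩

section Semantics

variable (Q0 : Set U) (Δ : Set (U × U × U)) (γ : U → Set U)

/-- Horizontal runs on plain strings. -/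
def WordRun : U → List U → U → Prop
  | p, [], q => p = q
  | p, a :: s, q => ∃ r, (p, a, r) ∈ Δ ∧ WordRun r s q

/-- `Collapse F s`: all subtrees of `F` can be evaluated so as to leave the plain string `s`. -/
def Collapse : Forest U → List U → Prop
  | .nil, s => s = []
  | .leaf a F, s => ∃ t, Collapse F t ∧ s = a :: t
  | .node F G, s => ∃ u i q b t, Collapse F u ∧ i ∈ Q0 ∧ WordRun Δ i u q ∧ b ∈ γ q ∧
      Collapse G t ∧ s = b :: t

/-- Big-step runs on forests. -/
def Run : Forest U → U → U → Prop
  | .nil, p, q => p = q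
  | .leaf a F, p, q => ∃ p', (p, a, p') ∈ Δ ∧ Run F p' q
  | .node F G, p, q => ∃ i ∈ Q0, ∃ s, Run F i s ∧ ∃ b ∈ γ s, ∃ p', (p, b, p') ∈ Δ ∧ Run G p' q

theorem run_iff_collapse (F : Forest U) (p q : U) :
    Run Q0 Δ γ F p q ↔ ∃ s, Collapse Q0 Δ γ F s ∧ WordRun Δ p s q := by
  induction F generalizing p q with
  | nil => simp [Run, Collapse, WordRun]
  | leaf a F ih =>
    simp only [Run, Collapse, ih]
    constructor
    · rintro ⟨p', h, s, hs, hr⟩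
      exact ⟨_, ⟨s, hs, rfl⟩, p', h, hr⟩
    · rintro ⟨_, ⟨s, hs, rfl⟩, p', h, hr⟩
      exact ⟨p', h, s, hs, hr⟩
  | node F G ih₁ ih₂ =>
    simp only [Run, Collapse, ih₁, ih₂]
    constructor
    · rintro ⟨i, hi, q', ⟨u, hu, hr⟩, b, hb, p', h, s, hs, hr'⟩
      exact ⟨_, ⟨u, i, q', b, s, hu, hi, hr, hb, hs, rfl⟩, p', h, hr'⟩
    · rintro ⟨_, ⟨u, i, q', b, s, hu, hi, hr, hb, hs, rfl⟩, p', h, hr'⟩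
      exact ⟨i, hi, q', ⟨u, hu, hr⟩, b, hb, p', h, s, hs, hr'⟩

theorem horizontal_moves {p q : U} {s : List U} (h : WordRun Δ p s q) (l r : List (TSym U)) :
    Relation.ReflTransGen (GMove Q0 Δ γ)
      (l ++ ([TSym.op, TSym.ltr p, TSym.slash] ++ strOf s ++ [TSym.cl] ++ r))
      (l ++ ([TSym.op, TSym.ltr q, TSym.slash, TSym.cl] ++ r)) := by
  induction s generalizing p with
  | nil => obtain rfl : p = q := h; exact .refl
  | cons a s ih =>
    obtain ⟨p', hp, hr⟩ := h
    refine .head ?_ (ih hr)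
    have := GMove.horiz (Q0 := Q0) (γ := γ) (l := l) (r := r) (s := s) hp
    simpa [strOf] using this

theorem eval_moves {p q : U} {s : List U} (hp : p ∈ Q0) (h : WordRun Δ p s q)
    (l r : List (TSym U)) :
    Relation.ReflTransGen (GMove Q0 Δ γ)
      (l ++ (TSym.op :: (strOf s ++ TSym.cl :: r)))
      (l ++ ([TSym.op, TSym.ltr q, TSym.slash, TSym.cl] ++ r)) := by
  refine .head ?_ (horizontal_moves Q0 Δ γ h l r)
  have := GMove.init (Δ := Δ) (γ := γ) (l := l) (r := r) (s := s) hp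
  simpa using this

theorem collapse_moves {F : Forest U} {s : List U} (h : Collapse Q0 Δ γ F s)
    (l r : List (TSym U)) :
    Relation.ReflTransGen (GMove Q0 Δ γ) (l ++ (F.enc ++ r)) (l ++ (strOf s ++ r)) := by
  induction F generalizing l r s with
  | nil => obtain rfl : s = [] := h; exact .refl
  | leaf a F ih =>
    obtain ⟨s, hs, rfl⟩ := h
    simpa [Forest.enc, strOf] using ih hs (l ++ [TSym.ltr a]) r
  | node F G ih₁ ih₂ =>
    obtain ⟨u, i, q, b, s, hu, hi, hr, hb, hs, rfl⟩ := h
    have h₁ := ih₁ hu (l ++ [TSym.op]) (TSym.cl :: (G.enc ++ r))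
    have h₂ := eval_moves Q0 Δ γ hi hr l (G.enc ++ r)
    have h₃ := GMove.vert (Q0 := Q0) (Δ := Δ) (l := l) (r := G.enc ++ r) hb
    have h₄ := ih₂ hs (l ++ [TSym.ltr b]) r
    simp only [Forest.enc, strOf, List.map_cons, List.append_assoc, List.cons_append,
      List.nil_append] at h₁ h₂ h₃ h₄ ⊢
    exact ((h₁.trans h₂).tail h₃).trans h₄

/-- One symbol of a left-to-right scan with a stack. A frame holds the state written before the
slash of an open bracket, if any, and the plain string read since. -/
inductive ScanStep : TSym U → List (Option U × List U) → List (Option U × List U) → Prop where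
  | op {S} : ScanStep TSym.op S ((none, []) :: S)
  | ltr {a o u S} : ScanStep (TSym.ltr a) ((o, u) :: S) ((o, u ++ [a]) :: S)
  | slash {a S} : ScanStep TSym.slash ((none, [a]) :: S) ((some a, []) :: S)
  | close {o u i q b o' u' S} : (o = some i ∨ o = none ∧ i ∈ Q0) → WordRun Δ i u q → b ∈ γ q →
      ScanStep TSym.cl ((o, u) :: (o', u') :: S) ((o', u' ++ [b]) :: S)
  | last {o u i q} : (o = some i ∨ o = none ∧ i ∈ Q0) → WordRun Δ i u q →
      ScanStep TSym.cl [(o, u)] [(some q, [])]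

/-- Left-to-right scan of a string of symbols. -/
def Scan : List (TSym U) → List (Option U × List U) → List (Option U × List U) → Prop
  | [], S, T => S = T
  | x :: w, S, T => ∃ M, ScanStep Q0 Δ γ x S M ∧ Scan w M T

theorem scan_append (v w : List (TSym U)) (S T : List (Option U × List U)) :
    Scan Q0 Δ γ (v ++ w) S T ↔ ∃ M, Scan Q0 Δ γ v S M ∧ Scan Q0 Δ γ w M T := by
  induction v generalizing S with
  | nil => simp [Scan]
  | cons x v ih =>
    simp only [List.cons_append, Scan, ih]
    constructor
    · rintro ⟨M, h, N, h₁, h₂⟩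
      exact ⟨N, ⟨M, h, h₁⟩, h₂⟩
    · rintro ⟨N, ⟨M, h, h₁⟩, h₂⟩
      exact ⟨M, h, N, h₁, h₂⟩

theorem scan_strOf (s : List U) (o : Option U) (u : List U) (S T : List (Option U × List U)) :
    Scan Q0 Δ γ (strOf s) ((o, u) :: S) T ↔ T = (o, u ++ s) :: S := by
  induction s generalizing u with
  | nil => simp [strOf, Scan, eq_comm]
  | cons a s ih =>
    have ih' := ih (u ++ [a])
    simp only [List.append_assoc, List.cons_append, List.nil_append] at ih'
    rw [← ih']
    constructor
    · rintro ⟨_, ⟨⟩, h⟩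
      exact h
    · intro h
      exact ⟨_, .ltr, h⟩

theorem scanStep_close_mono {o o' : Option U} {u u' : List U} {S T : List (Option U × List U)}
    (H : ∀ i q, (o = some i ∨ o = none ∧ i ∈ Q0) → WordRun Δ i u q →
      ∃ j, (o' = some j ∨ o' = none ∧ j ∈ Q0) ∧ WordRun Δ j u' q)
    (h : ScanStep Q0 Δ γ TSym.cl ((o, u) :: S) T) :
    ScanStep Q0 Δ γ TSym.cl ((o', u') :: S) T := by
  cases h with
  | close h₁ h₂ h₃ =>
    obtain ⟨j, h₄, h₅⟩ := H _ _ h₁ h₂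
    exact .close h₄ h₅ h₃
  | last h₁ h₂ =>
    obtain ⟨j, h₄, h₅⟩ := H _ _ h₁ h₂
    exact .last h₄ h₅

theorem scan_of_gmove {x y : List (TSym U)} (h : GMove Q0 Δ γ x y)
    {S T : List (Option U × List U)} (hy : Scan Q0 Δ γ y S T) : Scan Q0 Δ γ x S T := by
  cases h with
  | @init l r s a ha =>
    simp only [scan_append] at hy ⊢
    obtain ⟨M₁, ⟨M₂, ⟨M₃, ⟨M₄, hl, hp⟩, hs⟩, hc⟩, hr⟩ := hy
    obtain ⟨_, ⟨⟩, _, ⟨⟩, _, ⟨⟩, rfl⟩ := hp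
    rw [scan_strOf] at hs
    subst hs
    obtain ⟨_, hc, rfl⟩ := hc
    refine ⟨_, ⟨_, ⟨_, ⟨_, hl, _, .op, rfl⟩, (scan_strOf ..).2 rfl⟩, _, ?_, rfl⟩, hr⟩
    refine scanStep_close_mono Q0 Δ γ ?_ hc
    rintro i q (h | h) hw
    · obtain rfl : a = i := by simpa using h
      exact ⟨a, .inr ⟨rfl, ha⟩, hw⟩
    · simp at h
  | @horiz l r s a b c ha =>
    simp only [scan_append] at hy ⊢
    obtain ⟨M₁, ⟨M₂, ⟨M₃, ⟨M₄, hl, hp⟩, hs⟩, hc⟩, hr⟩ := hy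
    obtain ⟨_, ⟨⟩, _, ⟨⟩, _, ⟨⟩, rfl⟩ := hp
    rw [scan_strOf] at hs
    subst hs
    obtain ⟨_, hc, rfl⟩ := hc
    refine ⟨_, ⟨_, ⟨_, ⟨_, hl, _, .op, _, .ltr, _, .slash, _, .ltr, rfl⟩,
      (scan_strOf ..).2 rfl⟩, _, ?_, rfl⟩, hr⟩
    refine scanStep_close_mono Q0 Δ γ ?_ hc
    rintro i q (h | h) hw
    · obtain rfl : c = i := by simpa using h
      exact ⟨a, .inl rfl, c, ha, hw⟩
    · simp at h
  | @vert l r a b hb =>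
    simp only [scan_append] at hy ⊢
    obtain ⟨M₁, ⟨M₂, hl, hp⟩, hr⟩ := hy
    obtain ⟨_, ⟨⟩, rfl⟩ := hp
    exact ⟨_, ⟨_, hl, _, .op, _, .ltr, _, .slash, _, .close (.inl rfl) rfl hb, rfl⟩, hr⟩

theorem scan_enc {F : Forest U} {o : Option U} {u : List U} {S T : List (Option U × List U)}
    (h : Scan Q0 Δ γ F.enc ((o, u) :: S) T) :
    ∃ s, Collapse Q0 Δ γ F s ∧ T = (o, u ++ s) :: S := by
  induction F generalizing o u S T with
  | nil => exact ⟨[], rfl, by simpa [Scan, Forest.enc, eq_comm] using h⟩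
  | leaf a F ih =>
    obtain ⟨_, ⟨⟩, h⟩ := h
    obtain ⟨s, hs, rfl⟩ := ih h
    exact ⟨a :: s, ⟨s, hs, rfl⟩, by simp⟩
  | node F G ih₁ ih₂ =>
    obtain ⟨_, ⟨⟩, h⟩ := h
    rw [scan_append] at h
    obtain ⟨M, hF, N, hc, hG⟩ := h
    obtain ⟨v, hv, rfl⟩ := ih₁ hF
    cases hc with
    | close h₁ h₂ h₃ =>
      obtain ⟨s, hs, rfl⟩ := ih₂ hG
      simp only [reduceCtorEq, true_and, false_or] at h₁
      exact ⟨_, ⟨v, _, _, _, s, hv, h₁, h₂, h₃, hs, rfl⟩, by simp⟩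

theorem moves_finalTree_iff (F : Forest U) (q : U) :
    Relation.ReflTransGen (GMove Q0 Δ γ) F.tree (finalTree q) ↔ ∃ i ∈ Q0, Run Q0 Δ γ F i q := by
  simp only [run_iff_collapse]
  constructor
  · intro h
    have hs : Scan Q0 Δ γ F.tree [] [(some q, [])] := by
      generalize F.tree = t at h
      induction h using Relation.ReflTransGen.head_induction_on with
      | refl => exact ⟨_, .op, _, .ltr, _, .slash, _, .last (.inl rfl) rfl, rfl⟩
      | head h _ ih => exact scan_of_gmove Q0 Δ γ h ih
    obtain ⟨_, ⟨⟩, hs⟩ := hs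
    rw [scan_append] at hs
    obtain ⟨M, hF, N, hc, hN⟩ := hs
    obtain ⟨s, hs, rfl⟩ := scan_enc Q0 Δ γ hF
    cases hc with
    | last h₁ h₂ =>
      simp only [Scan, List.cons.injEq, Prod.mk.injEq, Option.some.injEq, and_true] at hN
      subst hN
      simp only [reduceCtorEq, true_and, false_or] at h₁
      exact ⟨_, h₁, s, hs, h₂⟩
  · rintro ⟨i, hi, s, hs, hr⟩
    have h₁ := collapse_moves Q0 Δ γ hs [TSym.op] [TSym.cl]
    have h₂ := eval_moves Q0 Δ γ hi hr [] []
    exact h₁.trans h₂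

theorem mem_GLang_iff (Sa Qf : Set U) (t : List (TSym U)) :
    t ∈ GLang Sa Q0 Δ γ Qf ↔
      ∃ F : Forest U, F.Over Sa ∧ F.tree = t ∧ ∃ q ∈ Qf, ∃ i ∈ Q0, Run Q0 Δ γ F i q := by
  constructor
  · rintro ⟨ht, q, hq, h⟩
    obtain ⟨F, hF, rfl⟩ := mem_treeSet_iff.1 ht
    exact ⟨F, hF, rfl, q, hq, (moves_finalTree_iff Q0 Δ γ F q).1 h⟩
  · rintro ⟨F, hF, rfl, q, hq, h⟩
    exact ⟨hF.isTree, q, hq, (moves_finalTree_iff Q0 Δ γ F q).2 h⟩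

end Semantics

section Determinisation

/-- The set of states reached from `A` by reading some symbol of `B`. -/
def stepSet (Δ : Set (U × U × U)) (A B : Set U) : Set U :=
  {c | ∃ a ∈ A, ∃ b ∈ B, (a, b, c) ∈ Δ}

/-- The set of states reached from `A` by reading the forest `F`. -/
def reach (Q0 : Set U) (Δ : Set (U × U × U)) (γ : U → Set U) (F : Forest U) (A : Set U) : Set U :=
  {q | ∃ p ∈ A, Run Q0 Δ γ F p q}

/-- Rules of the subset automaton, with letters renamed by `f` and sets of states named by `g`. -/
def detRules (Sa Q : Set U) (Δ : Set (U × U × U)) (γ : U → Set U) (f : U → V) (g : Set U → V) :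
    Set (V × V × V) :=
  {x | ∃ A ⊆ Q, x.1 = g A ∧
    ((∃ a ∈ Sa, x.2.1 = f a ∧ x.2.2 = g (stepSet Δ A {a})) ∨
     ∃ C ⊆ Q, x.2.1 = g C ∧ x.2.2 = g (stepSet Δ A (⋃ c ∈ C, γ c)))}

variable {Sa Q Q0 : Set U} {Δ : Set (U × U × U)} {γ : U → Set U} {f : U → V} {g : Set U → V}

theorem mem_detRules_letter (hf : Set.InjOn f Sa) (hg : Set.InjOn g (𝒫 Q))
    (hfg : ∀ A ⊆ Q, g A ∉ f '' Sa) {A : Set U} (hA : A ⊆ Q) {a : U} (ha : a ∈ Sa) (y : V) :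
    (g A, f a, y) ∈ detRules Sa Q Δ γ f g ↔ y = g (stepSet Δ A {a}) := by
  constructor
  · rintro ⟨A', hA', e, ⟨a', ha', e', e''⟩ | ⟨C, hC, e', -⟩⟩
    · obtain rfl := hg hA hA' e
      obtain rfl := hf ha ha' e'
      exact e''
    · exact absurd ⟨a, ha, e'⟩ (hfg C hC)
  · rintro rfl
    exact ⟨A, hA, rfl, .inl ⟨a, ha, rfl, rfl⟩⟩

theorem mem_detRules_state (hg : Set.InjOn g (𝒫 Q))
    (hfg : ∀ A ⊆ Q, g A ∉ f '' Sa) {A C : Set U} (hA : A ⊆ Q) (hC : C ⊆ Q) (y : V) :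
    (g A, g C, y) ∈ detRules Sa Q Δ γ f g ↔ y = g (stepSet Δ A (⋃ c ∈ C, γ c)) := by
  constructor
  · rintro ⟨A', hA', e, ⟨a', ha', e', -⟩ | ⟨C', hC', e', e''⟩⟩
    · exact absurd ⟨a', ha', e'.symm⟩ (hfg C hC)
    · obtain rfl := hg hA hA' e
      obtain rfl := hg hC hC' e'
      exact e''
  · rintro rfl
    exact ⟨A, hA, rfl, .inr ⟨C, hC, rfl, rfl⟩⟩

theorem deterministic_detRules (hf : Set.InjOn f Sa) (hg : Set.InjOn g (𝒫 Q))
    (hfg : ∀ A ⊆ Q, g A ∉ f '' Sa) : Deterministic (detRules Sa Q Δ γ f g) := by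
  rintro x y z₁ z₂ h₁ h₂
  obtain ⟨A, hA, e, ⟨a, ha, e', -⟩ | ⟨C, hC, e', -⟩⟩ := id h₁
  all_goals
    dsimp only at e e'
    subst e e'
  · rw [mem_detRules_letter hf hg hfg hA ha] at h₁ h₂
    rw [h₁, h₂]
  · rw [mem_detRules_state hg hfg hA hC] at h₁ h₂
    rw [h₁, h₂]

theorem stepSet_subset (hΔ : ∀ p ∈ Δ, p.1 ∈ Q ∧ p.2.1 ∈ Q ∧ p.2.2 ∈ Q) (A B : Set U) :
    stepSet Δ A B ⊆ Q := by
  rintro c ⟨a, -, b, -, h⟩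
  exact (hΔ _ h).2.2

theorem reach_nil (A : Set U) : reach Q0 Δ γ .nil A = A := by
  simp [reach, Run]

theorem reach_leaf (a : U) (F : Forest U) (A : Set U) :
    reach Q0 Δ γ (.leaf a F) A = reach Q0 Δ γ F (stepSet Δ A {a}) := by
  ext q
  simp only [reach, stepSet, Run, Set.mem_ofPred_eq, Set.mem_singleton_iff]
  grind

theorem reach_node (F G : Forest U) (A : Set U) :
    reach Q0 Δ γ (.node F G) A =
      reach Q0 Δ γ G (stepSet Δ A (⋃ c ∈ reach Q0 Δ γ F Q0, γ c)) := by
  ext q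
  simp only [reach, stepSet, Run, Set.mem_ofPred_eq, Set.mem_iUnion, exists_prop]
  constructor
  · rintro ⟨p, hp, i, hi, s, hs, b, hb, p', h, hr⟩
    exact ⟨p', ⟨p, hp, b, ⟨s, ⟨i, hi, hs⟩, hb⟩, h⟩, hr⟩
  · rintro ⟨p', ⟨p, hp, b, ⟨s, ⟨i, hi, hs⟩, hb⟩, h⟩, hr⟩
    exact ⟨p, hp, i, hi, s, hs, b, hb, p', h, hr⟩

theorem reach_subset (hΔ : ∀ p ∈ Δ, p.1 ∈ Q ∧ p.2.1 ∈ Q ∧ p.2.2 ∈ Q) (F : Forest U) {A : Set U}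
    (hA : A ⊆ Q) : reach Q0 Δ γ F A ⊆ Q := by
  induction F generalizing A with
  | nil => rwa [reach_nil]
  | leaf a F ih => rw [reach_leaf]; exact ih (stepSet_subset hΔ _ _)
  | node F G _ ih => rw [reach_node]; exact ih (stepSet_subset hΔ _ _)

theorem run_detRules_iff (hf : Set.InjOn f Sa) (hg : Set.InjOn g (𝒫 Q))
    (hfg : ∀ A ⊆ Q, g A ∉ f '' Sa) (hΔ : ∀ p ∈ Δ, p.1 ∈ Q ∧ p.2.1 ∈ Q ∧ p.2.2 ∈ Q)
    (hQ0 : Q0 ⊆ Q) {F : Forest U} (hF : F.Over Sa) {A : Set U} (hA : A ⊆ Q) (y : V) :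
    Run {g Q0} (detRules Sa Q Δ γ f g) (fun a => {a}) (F.map f) (g A) y ↔
      y = g (reach Q0 Δ γ F A) := by
  induction F generalizing A y with
  | nil => simp [Run, Forest.map, reach_nil, eq_comm]
  | leaf a F ih =>
    simp only [Run, Forest.map, mem_detRules_letter hf hg hfg hA hF.1, exists_eq_left, reach_leaf]
    exact ih hF.2 (stepSet_subset hΔ _ _) y
  | node F G ih₁ ih₂ =>
    simp only [Run, Forest.map, Set.mem_singleton_iff, exists_eq_left, ih₁ hF.1 hQ0,
      mem_detRules_state hg hfg hA (reach_subset hΔ F hQ0), reach_node]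
    exact ih₂ hF.2 (stepSet_subset hΔ _ _) y

theorem exists_injOn_avoiding {α : Type} [Infinite V] {s : Set α} (hs : s.Finite) {t : Set V}
    (ht : t.Finite) : ∃ g : α → V, Set.InjOn g s ∧ ∀ x ∈ s, g x ∉ t := by
  obtain ⟨g, hg, hinj⟩ :=
    hs.exists_injOn_of_encard_le (t := tᶜ) (by simp [ht.infinite_compl.encard_eq])
  exact ⟨g, hinj, fun x hx => hg hx⟩

theorem exists_deterministic [Infinite V] (hSa : Sa.Finite) (hf : Set.InjOn f Sa) {Qf : Set U}
    (hwf : GWF Sa Q Qf Q0 Δ γ) :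
    ∃ (Q' Qf' : Set V) (q0' : V) (Δ' : Set (V × V × V)),
      NWF (f '' Sa) Q' Qf' q0' Δ' ∧ Deterministic Δ' ∧
      NLang (f '' Sa) q0' Δ' Qf' = treeRel f '' GLang Sa Q0 Δ γ Qf := by
  obtain ⟨hQ, -, -, hQ0, hΔ, -⟩ := hwf
  obtain ⟨g, hg, hfg⟩ := exists_injOn_avoiding hQ.finite_subsets (hSa.image f)
  refine ⟨f '' Sa ∪ g '' (𝒫 Q), g '' {A | A ⊆ Q ∧ (A ∩ Qf).Nonempty}, g Q0,
    detRules Sa Q Δ γ f g, ⟨(hSa.image f).union (hQ.finite_subsets.image g),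
      Set.subset_union_left, ?_, .inr ⟨Q0, hQ0, rfl⟩, ?_⟩,
    deterministic_detRules hf hg hfg, ?_⟩
  · rintro _ ⟨A, hA, rfl⟩
    exact .inr ⟨A, hA.1, rfl⟩
  · rintro ⟨x, y, z⟩ ⟨A, hA, e, ⟨a, ha, e', e''⟩ | ⟨C, hC, e', e''⟩⟩
    all_goals
      dsimp only at e e' e''
      subst e e' e''
    · exact ⟨.inr ⟨A, hA, rfl⟩, .inl ⟨a, ha, rfl⟩, .inr ⟨_, stepSet_subset hΔ _ _, rfl⟩⟩
    · exact ⟨.inr ⟨A, hA, rfl⟩, .inr ⟨C, hC, rfl⟩, .inr ⟨_, stepSet_subset hΔ _ _, rfl⟩⟩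
  · have key : ∀ F : Forest U, F.Over Sa →
        ((∃ q ∈ g '' {A | A ⊆ Q ∧ (A ∩ Qf).Nonempty}, ∃ i ∈ ({g Q0} : Set V),
          Run {g Q0} (detRules Sa Q Δ γ f g) (fun a => {a}) (F.map f) i q) ↔
        ∃ q ∈ Qf, ∃ i ∈ Q0, Run Q0 Δ γ F i q) := by
      intro F hF
      simp only [Set.mem_singleton_iff, exists_eq_left,
        run_detRules_iff hf hg hfg hΔ hQ0 hF hQ0, exists_eq_right]
      constructor
      · rintro ⟨A, ⟨hA, q, hq, hqf⟩, e⟩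
        obtain rfl := hg hA (reach_subset hΔ F hQ0) e
        exact ⟨q, hqf, hq⟩
      · rintro ⟨q, hqf, hq⟩
        exact ⟨_, ⟨reach_subset hΔ F hQ0, q, hq, hqf⟩, rfl⟩
    ext t
    rw [NLang, mem_GLang_iff]
    constructor
    · rintro ⟨F', hF', rfl, h⟩
      obtain ⟨F, hF, rfl⟩ := hF'.exists_map
      exact ⟨F.tree, (mem_GLang_iff ..).2 ⟨F, hF, rfl, (key F hF).1 h⟩, (F.tree_map f).symm⟩
    · rintro ⟨_, ht, rfl⟩
      obtain ⟨F, hF, rfl, h⟩ := (mem_GLang_iff ..).1 ht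
      exact ⟨F.map f, hF.map f, F.tree_map f, (key F hF).2 h⟩

end Determinisation

theorem NWF.gwf {Sa Q Qf : Set U} {q0 : U} {Δ : Set (U × U × U)} (h : NWF Sa Q Qf q0 Δ) :
    GWF Sa Q Qf {q0} Δ (fun a => {a}) :=
  ⟨h.1, h.2.1, h.2.2.1, by simpa using h.2.2.2.1, h.2.2.2.2, fun _ hq => by simpa using hq⟩

theorem treeRel_comp_image {W : Type} (f : U → V) (g : V → W) (L : Set (List (TSym U))) :
    treeRel g '' (treeRel f '' L) = treeRel (g ∘ f) '' L := by
  rw [Set.image_image]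
  congr 1
  ext1 t
  simp only [treeRel, List.map_map]
  congr 1
  ext1 x
  cases x <;> rfl

theorem treeRel_id_image (L : Set (List (TSym U))) : treeRel id '' L = L := by
  have h : symRel (id : U → U) = id := by
    ext1 x
    cases x <;> rfl
  have h' : treeRel (id : U → U) = id := by
    ext1 t
    simp [treeRel, h]
  rw [h', Set.image_id]

/-- Deterministic, non-deterministic, and generalised finite
string tree automata recognise the same class of string tree languages:
`L ⊆ T(Σ)` is recognised by some GNFSTA iff it is recognised by some NFSTA,
iff it is recognised (after the injective alphabet renaming `a ↦ {a}`) by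
some DFSTA. -/
theorem equivalence_of_automata {U : Type} [Infinite U] (Sa : Set U)
    (hSa : Sa.Finite) (L : Set (List (TSym U))) (hL : L ⊆ TreeSet Sa) :
    (RecogG Sa L ↔ RecogN Sa L) ∧ (RecogN Sa L ↔ RecogD Sa L) := by
  have hsing : Function.Injective (sing : U → Set U) := Set.singleton_injective
  refine ⟨⟨?_, ?_⟩, ⟨?_, ?_⟩⟩
  · rintro ⟨Q, Qf, Q0, Δ, γ, hwf, rfl⟩
    obtain ⟨Q', Qf', q0', Δ', hN, -, h⟩ :=
      exists_deterministic (f := id) hSa (Set.injOn_id Sa) hwf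
    rw [Set.image_id] at hN h
    exact ⟨Q', Qf', q0', Δ', hN, h.trans (treeRel_id_image _)⟩
  · rintro ⟨Q, Qf, q0, Δ, hwf, h⟩
    exact ⟨Q, Qf, {q0}, Δ, _, hwf.gwf, h⟩
  · rintro ⟨Q, Qf, q0, Δ, hwf, rfl⟩
    have : Infinite (Set U) := Infinite.of_injective _ hsing
    exact exists_deterministic (f := sing) hSa hsing.injOn hwf.gwf
  · rintro ⟨Q, Qf, q0, Δ, hwf, -, h⟩
    have hcomp : Function.invFun sing ∘ (sing : U → Set U) = id := Function.invFun_comp hsing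
    have hinj : Set.InjOn (Function.invFun sing) (sing '' Sa) := by
      rintro _ ⟨a, -, rfl⟩ _ ⟨b, -, rfl⟩ e
      exact congrArg sing ((congrFun hcomp a).symm.trans (e.trans (congrFun hcomp b)))
    obtain ⟨Q', Qf', q0', Δ', hN, -, h'⟩ :=
      exists_deterministic (f := Function.invFun sing) (hSa.image sing) hinj hwf.gwf
    rw [← Set.image_comp, hcomp, Set.image_id] at hN h'
    refine ⟨Q', Qf', q0', Δ', hN, h'.trans ?_⟩
    change treeRel _ '' NLang (sing '' Sa) q0 Δ Qf = L
    rw [h, treeRel_comp_image, hcomp, treeRel_id_image]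

end StringTree
end

section
/- For any finite (string) automaton FA over Σ there exists an FSTA over Σ that recognises the vertical tree representation of FA's language: there is an NFSTA A with L(A) = ω(L(FA)) = {ω(s) | s ∈ L(FA)}, where ω maps each string to its vertical tree representation. -/
namespace StringTree

/-! A stack evaluator for string trees: it reads a tree from left to right and keeps one frame per
open bracket. -/

/-- A frame of the stack evaluator: below the outermost tree (`root`, or `done a` once that tree has
been evaluated to `a`), in a bracket nothing of which has been read (`fresh`), after `⟨a` when a
slash is expected (`pending a`), or in a bracket with current state `a` (`state a`). -/
inductive Frame (U : Type) : Type where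
  | root : Frame U
  | done : U → Frame U
  | fresh : Frame U
  | pending : U → Frame U
  | state : U → Frame U

/-- Reading a plain symbol, or the value of a completed subtree. -/
inductive Feed (q0 : U) (Δ : Set (U × U × U)) : Frame U → U → Frame U → Prop where
  | root (b : U) : Feed q0 Δ .root b (.done b)
  | pending (b : U) : Feed q0 Δ .fresh b (.pending b)
  | fresh {b c : U} : (q0, b, c) ∈ Δ → Feed q0 Δ .fresh b (.state c)
  | state {a b c : U} : (a, b, c) ∈ Δ → Feed q0 Δ (.state a) b (.state c)

/-- One step of the stack evaluator. -/
inductive EvalStep (q0 : U) (Δ : Set (U × U × U)) :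
    List (Frame U) → TSym U → List (Frame U) → Prop where
  | op (σ : List (Frame U)) : EvalStep q0 Δ σ .op (.fresh :: σ)
  | ltr {k k' : Frame U} {b : U} {σ : List (Frame U)} :
      Feed q0 Δ k b k' → EvalStep q0 Δ (k :: σ) (.ltr b) (k' :: σ)
  | slash (a : U) (σ : List (Frame U)) :
      EvalStep q0 Δ (.pending a :: σ) .slash (.state a :: σ)
  | clFresh {k k' : Frame U} {σ : List (Frame U)} :
      Feed q0 Δ k q0 k' → EvalStep q0 Δ (.fresh :: k :: σ) .cl (k' :: σ)
  | clState {a : U} {k k' : Frame U} {σ : List (Frame U)} :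
      Feed q0 Δ k a k' → EvalStep q0 Δ (.state a :: k :: σ) .cl (k' :: σ)

/-- Runs of the stack evaluator. -/
def EvalRun (q0 : U) (Δ : Set (U × U × U)) :
    List (Frame U) → List (TSym U) → List (Frame U) → Prop
  | σ, [], τ => σ = τ
  | σ, x :: w, τ => ∃ ρ, EvalStep q0 Δ σ x ρ ∧ EvalRun q0 Δ ρ w τ

theorem evalRun_append {q0 : U} {Δ : Set (U × U × U)} {u v : List (TSym U)}
    {σ τ : List (Frame U)} :
    EvalRun q0 Δ σ (u ++ v) τ ↔ ∃ ρ, EvalRun q0 Δ σ u ρ ∧ EvalRun q0 Δ ρ v τ := by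
  induction u generalizing σ with
  | nil => simp [EvalRun]
  | cons x u ih =>
    simp only [List.cons_append, EvalRun, ih]
    constructor
    · rintro ⟨ρ, h, ρ', h1, h2⟩
      exact ⟨ρ', ⟨ρ, h, h1⟩, h2⟩
    · rintro ⟨ρ', ⟨ρ, h, h1⟩, h2⟩
      exact ⟨ρ, h, ρ', h1, h2⟩

/-- The evaluator reaches `state a` after `⟨a/`. -/
theorem evalRun_slash_iff {q0 a : U} {Δ : Set (U × U × U)} {w : List (TSym U)}
    {σ τ : List (Frame U)} :
    EvalRun q0 Δ σ (TSym.op :: TSym.ltr a :: TSym.slash :: w) τ ↔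
      EvalRun q0 Δ (.state a :: σ) w τ := by
  constructor
  · rintro ⟨_, ⟨⟩, _, ⟨⟩ | hf, _, hs, h'⟩
    cases hf <;> cases hs
    exact h'
  · exact fun h => ⟨_, .op _, _, .ltr (.pending a), _, .slash _ _, h⟩

/-- A fresh frame simulates the initial state on a string followed by a closing bracket. -/
theorem evalRun_fresh_of_state {q0 : U} {Δ : Set (U × U × U)} {s : List U} {r : List (TSym U)}
    {σ τ : List (Frame U)}
    (h : EvalRun q0 Δ (.state q0 :: σ) (strOf s ++ TSym.cl :: r) τ) :
    EvalRun q0 Δ (.fresh :: σ) (strOf s ++ TSym.cl :: r) τ := by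
  cases s with
  | nil =>
    obtain ⟨_, ⟨⟩ | ⟨⟩ | ⟨⟩ | ⟨⟩ | hf, h'⟩ := h
    exact ⟨_, .clFresh hf, h'⟩
  | cons b s =>
    obtain ⟨_, ⟨⟩ | ⟨⟨⟩ | ⟨⟩ | ⟨⟩ | hd⟩, h'⟩ := h
    exact ⟨_, .ltr (.fresh hd), h'⟩

/-- Every evaluation of a configuration lifts to its predecessors under the move relation. -/
theorem EvalRun.of_move {q0 : U} {Δ : Set (U × U × U)} {w w' : List (TSym U)}
    {σ τ : List (Frame U)} (hm : GMove {q0} Δ (fun a => {a}) w w')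
    (h : EvalRun q0 Δ σ w' τ) : EvalRun q0 Δ σ w τ := by
  cases hm with
  | init ha =>
    obtain rfl := ha
    simp only [List.append_assoc, List.cons_append, List.nil_append] at h ⊢
    obtain ⟨ρ, h1, h2⟩ := evalRun_append.1 h
    rw [evalRun_slash_iff] at h2
    exact evalRun_append.2 ⟨ρ, h1, _, .op _, evalRun_fresh_of_state h2⟩
  | horiz hd =>
    simp only [List.append_assoc, List.cons_append, List.nil_append] at h ⊢
    obtain ⟨ρ, h1, h2⟩ := evalRun_append.1 h
    rw [evalRun_slash_iff] at h2
    exact evalRun_append.2 ⟨ρ, h1, evalRun_slash_iff.2 ⟨_, .ltr (.state hd), h2⟩⟩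
  | vert hb =>
    obtain rfl := hb
    simp only [List.append_assoc, List.cons_append, List.nil_append] at h ⊢
    obtain ⟨ρ, h1, _, ⟨⟩ | hf, h2⟩ := evalRun_append.1 h
    exact evalRun_append.2 ⟨_, h1, evalRun_slash_iff.2 ⟨_, .clState hf, h2⟩⟩

theorem evalRun_of_reaches {q0 qf : U} {Δ : Set (U × U × U)} {t : List (TSym U)}
    (h : Relation.ReflTransGen (GMove {q0} Δ (fun a => {a})) t (finalTree qf)) :
    EvalRun q0 Δ [.root] t [.done qf] := by
  induction h using Relation.ReflTransGen.head_induction_on with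
  | refl => exact evalRun_slash_iff.2 ⟨_, .clState (.root qf), rfl⟩
  | head hm _ ih => exact ih.of_move hm

/-- Contents of string trees: strings of symbols of `S` and of bracketed contents. -/
inductive IsForest (S : Set (TSym U)) : List (TSym U) → Prop where
  | nil : IsForest S []
  | snoc {x : List (TSym U)} {a : TSym U} : IsForest S x → a ∈ S → IsForest S (x ++ [a])
  | snocTree {x y : List (TSym U)} : IsForest S x → IsForest S y →
      IsForest S (x ++ (TSym.op :: (y ++ [TSym.cl])))

theorem IsForest.append {S : Set (TSym U)} {x y : List (TSym U)} (hx : IsForest S x)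
    (hy : IsForest S y) : IsForest S (x ++ y) := by
  induction hy with
  | nil => simpa
  | snoc _ ha ih => simpa using ih.snoc ha
  | snocTree _ hz ih _ => simpa using ih.snocTree hz

theorem IsTree.exists_isForest {S : Set (TSym U)} {t : List (TSym U)} (h : IsTree S t) :
    ∃ x, t = TSym.op :: (x ++ [TSym.cl]) ∧ IsForest S x := by
  induction h with
  | nil => exact ⟨[], rfl, .nil⟩
  | single ha => exact ⟨_, rfl, IsForest.nil.snoc ha⟩
  | concat _ _ ihx ihy =>
    obtain ⟨x, hx, hx'⟩ := ihx
    obtain ⟨y, hy, hy'⟩ := ihy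
    simp only [List.cons.injEq, true_and, List.append_cancel_right_eq] at hx hy
    subst hx hy
    exact ⟨_, rfl, hx'.append hy'⟩
  | encap _ ih =>
    obtain ⟨x, rfl, hx⟩ := ih
    exact ⟨_, rfl, IsForest.nil.snocTree hx⟩

theorem omega_concat (s : List U) (a : U) :
    omega (s ++ [a]) = TSym.op :: (omega s ++ [TSym.ltr a, TSym.cl]) := by
  simp [omega, omegaRev]

theorem omega_mem_treeSet {Sa : Set U} {s : List U} (hs : ∀ a ∈ s, a ∈ Sa) :
    omega s ∈ TreeSet Sa := by
  induction s using List.reverseRecOn with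
  | nil => exact .nil
  | append_singleton s a ih =>
    have ha : IsTree (ltrs Sa) (TSym.op :: ([TSym.ltr a] ++ [TSym.cl])) :=
      .single ⟨a, hs a (by simp), rfl⟩
    have ht := (IsTree.encap (ih fun b hb => hs b (by simp [hb]))).concat ha
    rw [omega_concat]
    simpa [TreeSet] using ht

theorem fASteps_concat {δ : U → U → Set U} {q p : U} {s : List U} {a : U} :
    FASteps δ q (s ++ [a]) p ↔ ∃ r, FASteps δ q s r ∧ p ∈ δ r a := by
  induction s generalizing q with
  | nil =>
    constructor
    · rintro (_ | ⟨h, ⟨⟩⟩)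
      exact ⟨q, .nil q, h⟩
    · rintro ⟨_, ⟨⟩, h⟩
      exact .cons h (.nil _)
  | cons b s ih =>
    constructor
    · rintro (_ | ⟨h, h'⟩)
      obtain ⟨r, h1, h2⟩ := ih.1 h'
      exact ⟨r, .cons h h1, h2⟩
    · rintro ⟨r, _ | ⟨h, h'⟩, h2⟩
      exact .cons h (ih.2 ⟨r, h', h2⟩)

theorem FASteps.mem {δ : U → U → Set U} {Q : Set U} (hδ : ∀ q a, δ q a ⊆ Q) {q p : U}
    {s : List U} (h : FASteps δ q s p) (hq : q ∈ Q) : p ∈ Q := by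
  induction h with
  | nil => exact hq
  | cons hp _ ih => exact ih (hδ _ _ hp)

theorem GMove.context {Q0 : Set U} {Δ : Set (U × U × U)} {γ : U → Set U}
    {w w' : List (TSym U)} (h : GMove Q0 Δ γ w w') (l r : List (TSym U)) :
    GMove Q0 Δ γ (l ++ w ++ r) (l ++ w' ++ r) := by
  cases h with
  | @init l' r' s a ha =>
    simpa using GMove.init (Δ := Δ) (γ := γ) (l := l ++ l') (r := r' ++ r) (s := s) ha
  | @horiz l' r' s a b c hd =>
    simpa using GMove.horiz (Q0 := Q0) (γ := γ) (l := l ++ l') (r := r' ++ r) (s := s) hd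
  | @vert l' r' a b hb =>
    simpa using GMove.vert (Q0 := Q0) (Δ := Δ) (l := l ++ l') (r := r' ++ r) hb

/-- The rules of the tree automaton for vertical representations. The state `e none` is initial,
`e (some (inl q))` is the value of a subtree `ω(s)` for which the string automaton may be in state
`q` after reading `s`, and `e (some (inr q))` is the state reached after reading that subtree. -/
def vertRules (Sa Q : Set U) (δ : U → U → Set U) (q0 : U) (e : Option (U ⊕ U) → U) :
    Set (U × U × U) :=
  {x | x = (e none, e none, e (some (.inr q0))) ∨
    (∃ q ∈ Q, x = (e none, e (some (.inl q)), e (some (.inr q)))) ∨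
    ∃ q ∈ Q, ∃ a ∈ Sa, ∃ p ∈ δ q a, x = (e (some (.inr q)), a, e (some (.inl p)))}

/-- What the evaluator for `vertRules` can have computed after reading the content `x` of a
bracket. -/
inductive VertFrame (Sa : Set U) (δ : U → U → Set U) (q0 : U) (e : Option (U ⊕ U) → U) :
    List (TSym U) → Frame U → Prop where
  | fresh : VertFrame Sa δ q0 e [] .fresh
  | pending (x : List (TSym U)) (b : U) : VertFrame Sa δ q0 e x (.pending b)
  | child {u : List U} {q : U} : (∀ a ∈ u, a ∈ Sa) → FASteps δ q0 u q →
      VertFrame Sa δ q0 e (omega u) (.state (e (some (.inr q))))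
  | letter {u : List U} {a p : U} : (∀ b ∈ u ++ [a], b ∈ Sa) → FASteps δ q0 (u ++ [a]) p →
      VertFrame Sa δ q0 e (omega u ++ [TSym.ltr a]) (.state (e (some (.inl p))))

section

variable {Sa Q : Set U} {δ : U → U → Set U} {q0 : U} {e : Option (U ⊕ U) → U}

theorem VertFrame.feed_letter (he : e.Injective) (heS : ∀ x, e x ∉ Sa) {x : List (TSym U)}
    {k k' : Frame U} {a : U} (h : VertFrame Sa δ q0 e x k) (ha : a ∈ Sa)
    (hf : Feed (e none) (vertRules Sa Q δ q0 e) k a k') :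
    VertFrame Sa δ q0 e (x ++ [TSym.ltr a]) k' := by
  have hne : ∀ y, a ≠ e y := fun y hy => heS y (hy ▸ ha)
  cases h with
  | fresh =>
    cases hf with
    | pending => exact .pending _ _
    | fresh hd => simp [vertRules, hne, he.eq_iff] at hd
  | pending => cases hf
  | child hu hs =>
    obtain ⟨⟩ | ⟨⟩ | ⟨⟩ | hd := hf
    simp only [vertRules, Set.mem_ofPred_eq, Prod.mk.injEq, he.eq_iff, hne, reduceCtorEq, false_and,
      and_false, exists_false, false_or, Option.some.injEq, Sum.inr.injEq] at hd
    obtain ⟨_, -, _, -, p, hp, rfl, rfl, rfl⟩ := hd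
    refine .letter (fun b hb => ?_) (fASteps_concat.2 ⟨_, hs, hp⟩)
    rcases List.mem_append.1 hb with hb | hb
    · exact hu b hb
    · rwa [List.mem_singleton.1 hb]
  | letter =>
    obtain ⟨⟩ | ⟨⟩ | ⟨⟩ | hd := hf
    simp [vertRules, he.eq_iff] at hd

/-- Only a fresh bracket can read the value of a subtree. -/
theorem VertFrame.feed_state (he : e.Injective) (heS : ∀ x, e x ∉ Sa) {x : List (TSym U)}
    {k k' : Frame U} {y : Option (U ⊕ U)} (h : VertFrame Sa δ q0 e x k)
    (hf : Feed (e none) (vertRules Sa Q δ q0 e) k (e y) k') :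
    x = [] ∧ (k' = .pending (e y) ∨ (y = none ∧ k' = .state (e (some (.inr q0)))) ∨
      ∃ q, y = some (.inl q) ∧ k' = .state (e (some (.inr q)))) := by
  cases h with
  | fresh =>
    cases hf with
    | pending => simp
    | fresh hd =>
      simp only [vertRules, Set.mem_ofPred_eq, Prod.mk.injEq, he.eq_iff] at hd
      rcases hd with ⟨-, rfl, rfl⟩ | ⟨q, -, -, rfl, rfl⟩ | ⟨q, -, a, -, p, -, h, -⟩
      · simp
      · simp
      · cases h
  | pending => cases hf
  | child =>
    obtain ⟨⟩ | ⟨⟩ | ⟨⟩ | hd := hf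
    simp only [vertRules, Set.mem_ofPred_eq, Prod.mk.injEq, he.eq_iff] at hd
    rcases hd with ⟨h, -⟩ | ⟨q, -, h, -⟩ | ⟨q, -, a, ha, p, -, -, h, -⟩
    · cases h
    · cases h
    · exact absurd (h ▸ ha) (heS y)
  | letter =>
    obtain ⟨⟩ | ⟨⟩ | ⟨⟩ | hd := hf
    simp [vertRules, he.eq_iff] at hd

theorem vertFrame_of_evalRun (he : e.Injective) (heS : ∀ x, e x ∉ Sa) {x : List (TSym U)}
    (hx : IsForest (ltrs Sa) x) {σ τ : List (Frame U)}
    (h : EvalRun (e none) (vertRules Sa Q δ q0 e) (.fresh :: σ) x τ) :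
    ∃ k, τ = k :: σ ∧ VertFrame Sa δ q0 e x k := by
  induction hx generalizing σ τ with
  | nil => exact ⟨_, h.symm, .fresh⟩
  | snoc _ ha ih =>
    obtain ⟨a, ha, rfl⟩ := ha
    obtain ⟨_, h1, h2⟩ := evalRun_append.1 h
    obtain ⟨k, rfl, hk⟩ := ih h1
    obtain ⟨_, ⟨⟩ | hf, rfl⟩ := h2
    exact ⟨_, rfl, hk.feed_letter he heS ha hf⟩
  | @snocTree x y _ _ ihx ihy =>
    obtain ⟨_, h1, _, ⟨⟩, h2⟩ := evalRun_append.1 h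
    obtain ⟨k, rfl, hk⟩ := ihx h1
    obtain ⟨_, h3, _, hs, rfl⟩ := evalRun_append.1 h2
    obtain ⟨k', rfl, hk'⟩ := ihy h3
    cases hk' with
    | fresh =>
      obtain ⟨⟩ | ⟨⟩ | ⟨⟩ | hf := hs
      obtain ⟨rfl, rfl | ⟨-, rfl⟩ | ⟨q, hy, -⟩⟩ := hk.feed_state he heS hf
      · exact ⟨_, rfl, .pending _ _⟩
      · exact ⟨_, rfl, .child (u := []) (by simp) (.nil q0)⟩
      · cases hy
    | pending => cases hs
    | child =>
      obtain ⟨⟩ | ⟨⟩ | ⟨⟩ | ⟨⟩ | hf := hs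
      obtain ⟨rfl, rfl | ⟨hy, -⟩ | ⟨q, hy, -⟩⟩ := hk.feed_state he heS hf
      · exact ⟨_, rfl, .pending _ _⟩
      · cases hy
      · cases hy
    | @letter u a p hu hp =>
      obtain ⟨⟩ | ⟨⟩ | ⟨⟩ | ⟨⟩ | hf := hs
      obtain ⟨rfl, rfl | ⟨hy, -⟩ | ⟨q, hy, rfl⟩⟩ := hk.feed_state he heS hf
      · exact ⟨_, rfl, .pending _ _⟩
      · cases hy
      · cases hy
        refine ⟨_, rfl, ?_⟩
        have := VertFrame.child (e := e) hu hp
        rw [omega_concat] at this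
        simpa using this

/-- Each tree `ω(s)` reduces to the final tree of the value of a run of the string automaton. -/
theorem exists_reaches_of_fASteps (hδ : ∀ q a, δ q a ⊆ Q) (hq0 : q0 ∈ Q) {s : List U} {p : U}
    (hs : ∀ a ∈ s, a ∈ Sa) (h : FASteps δ q0 s p) :
    ∃ b, (e none, b, e (some (.inr p))) ∈ vertRules Sa Q δ q0 e ∧
      (b = e (some (.inl p)) ∨ (b = e none ∧ p = q0)) ∧
      Relation.ReflTransGen (NMove (e none) (vertRules Sa Q δ q0 e)) (omega s)
        (finalTree b) := by
  induction s using List.reverseRecOn generalizing p with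
  | nil =>
    cases h
    exact ⟨e none, .inl rfl, .inr ⟨rfl, rfl⟩,
      .single (GMove.init (l := []) (r := []) (s := []) rfl)⟩
  | append_singleton s a ih =>
    obtain ⟨q, hq, hp⟩ := fASteps_concat.1 h
    obtain ⟨b, hb, -, hr⟩ := ih (fun b hb => hs b (by simp [hb])) hq
    have hqQ : q ∈ Q := hq.mem hδ hq0
    refine ⟨_, .inr (.inl ⟨p, hδ _ _ hp, rfl⟩), .inl rfl, ?_⟩
    have hctx := hr.lift (fun w => [TSym.op] ++ w ++ [TSym.ltr a, TSym.cl])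
      fun _ _ hm => GMove.context hm _ _
    rw [omega_concat]
    rw [← List.cons_append]
    refine Relation.ReflTransGen.trans hctx ?_
    refine .head (GMove.vert (l := [TSym.op]) (r := [TSym.ltr a, TSym.cl]) rfl) ?_
    refine .head (GMove.init (l := []) (r := []) (s := [b, a]) rfl) ?_
    refine .head (GMove.horiz (l := []) (r := []) (s := [a]) hb) ?_
    exact .single (GMove.horiz (l := []) (r := []) (s := [])
      (.inr (.inr ⟨q, hqQ, a, hs a (by simp), p, hp, rfl⟩)))

end

theorem exists_injective_notMem [Infinite U] {Sa : Set U} (hSa : Sa.Finite) :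
    ∃ e : Option (U ⊕ U) → U, e.Injective ∧ ∀ x, e x ∉ Sa := by
  have hcard : Cardinal.mk (Option (U ⊕ U)) ≤ Cardinal.mk (Saᶜ : Set U) := by
    rw [Cardinal.mk_compl_of_infinite Sa
      (hSa.lt_aleph0.trans_le (Cardinal.aleph0_le_mk U)), Cardinal.mk_option, Cardinal.mk_sum]
    simp
  obtain ⟨e⟩ := hcard
  exact ⟨fun x => e x, Subtype.val_injective.comp e.injective, fun x => (e x).2⟩

/-- For any finite (string) automaton `FA` over `Σ` there
exists an FSTA over `Σ` that recognises the vertical tree representation of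
`FA`'s language: there is an NFSTA `A` with
`L(A) = ω(L(FA)) = {ω(s) | s ∈ L(FA)}`. -/
theorem fa_vertical_representation {U : Type} [Infinite U] (Sa Q Qf : Set U)
    (q0 : U) (δ : U → U → Set U)
    (hSa : Sa.Finite) (hQ : Q.Finite) (hQf : Qf ⊆ Q) (hq0 : q0 ∈ Q)
    (hδ : ∀ q a, δ q a ⊆ Q) :
    ∃ (Q' Qf' : Set U) (q0' : U) (Δ : Set (U × U × U)),
      NWF Sa Q' Qf' q0' Δ ∧
      NLang Sa q0' Δ Qf' = omega '' FALang Sa δ q0 Qf := by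
  obtain ⟨e, he, heS⟩ := exists_injective_notMem hSa
  have hδQ : ∀ {q a p}, p ∈ δ q a → p ∈ Q := fun h => hδ _ _ h
  refine ⟨Sa ∪ e '' (insert none (some '' (Sum.inl '' Q ∪ Sum.inr '' Q))),
    {b | (b = e none ∧ q0 ∈ Qf) ∨ ∃ q ∈ Qf, b = e (some (.inl q))}, e none,
    vertRules Sa Q δ q0 e, ⟨?_, Set.subset_union_left, ?_, ?_, ?_⟩, ?_⟩
  · exact hSa.union (((((hQ.image _).union (hQ.image _)).image _).insert _).image _)
  · rintro _ (⟨rfl, -⟩ | ⟨q, hq, rfl⟩)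
    · simp
    · simp [he.eq_iff, hQf hq]
  · simp
  · rintro _ (rfl | ⟨q, hq, rfl⟩ | ⟨q, hq, a, ha, p, hp, rfl⟩)
    · simp [he.eq_iff, hq0]
    · simp [he.eq_iff, hq]
    · simp [he.eq_iff, hq, ha, hδQ hp]
  · ext t
    constructor
    · rintro ⟨ht, b, hb, hr⟩
      obtain ⟨x, rfl, hx⟩ := IsTree.exists_isForest ht
      obtain ⟨_, ⟨⟩, h⟩ := evalRun_of_reaches hr
      obtain ⟨_, h1, _, h2, h3⟩ := evalRun_append.1 h
      obtain ⟨k, rfl, hk⟩ := vertFrame_of_evalRun he heS hx h1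
      cases h3
      cases hk with
      | fresh =>
        obtain ⟨⟩ | ⟨⟩ | ⟨⟩ | ⟨⟨⟩⟩ := h2
        rcases hb with ⟨-, hb⟩ | ⟨q, -, hb⟩
        · exact ⟨[], ⟨by simp, q0, hb, .nil q0⟩, rfl⟩
        · cases he hb
      | pending => cases h2
      | child =>
        obtain ⟨⟩ | ⟨⟩ | ⟨⟩ | ⟨⟩ | ⟨⟨⟩⟩ := h2
        rcases hb with ⟨hb, -⟩ | ⟨q, -, hb⟩ <;> cases he hb
      | @letter u a p hu hp =>
        obtain ⟨⟩ | ⟨⟩ | ⟨⟩ | ⟨⟩ | ⟨⟨⟩⟩ := h2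
        rcases hb with ⟨hb, -⟩ | ⟨q, hq, hb⟩ <;> cases he hb
        exact ⟨u ++ [a], ⟨hu, p, hq, hp⟩, by simp [omega_concat]⟩
    · rintro ⟨s, ⟨hs, p, hp, hsp⟩, rfl⟩
      obtain ⟨b, -, hb, hr⟩ := exists_reaches_of_fASteps (e := e) hδ hq0 hs hsp
      refine ⟨omega_mem_treeSet hs, b, ?_, hr⟩
      rcases hb with rfl | ⟨rfl, rfl⟩
      · exact .inr ⟨p, hp, rfl⟩
      · exact .inl ⟨rfl, hp⟩

end StringTree
end
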